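/- arXiv:0901.0455 — 12 statements merged into one kernel-verified Lean document; each statement's English description precedes it below -/
import Mathlib

section
/- Let y ∈ K, where K is the convex support, and suppose θ̂₁, θ̂₂ ∈ Θ both attain the supremum of the log likelihood l over Θ. Then θ̂₁ − θ̂₂ is a direction of constancy, that is, ⟨x − y, θ̂₁ − θ̂₂⟩ = 0 for ν-almost every x; consequently μ_{θ̂₁} = μ_{θ̂₂}. -/
open MeasureTheory Real Filter Topology Set
open scoped RealInnerProductSpace ENNReal

/-- The normalizing integral (Laplace transform) `∫ exp⟪x, θ⟫ dν(x)` as an `ℝ≥0∞`-valued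
lower integral; `θ` lies in the natural parameter space iff this is finite. -/
noncomputable def partitionFn {p : ℕ} (ν : Measure (EuclideanSpace ℝ (Fin p)))
    (θ : EuclideanSpace ℝ (Fin p)) : ℝ≥0∞ :=
  ∫⁻ x, ENNReal.ofReal (Real.exp ⟪x, θ⟫) ∂ν

/-- The cumulant function `c(θ) = log ∫ exp⟪x, θ⟫ dν(x)` (real-valued; meaningful on the
natural parameter space `{θ | partitionFn ν θ < ⊤}`). -/
noncomputable def cumulant {p : ℕ} (ν : Measure (EuclideanSpace ℝ (Fin p)))
    (θ : EuclideanSpace ℝ (Fin p)) : ℝ :=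
  Real.log (partitionFn ν θ).toReal

/-- The extended-real-valued cumulant function, equal to `⊤` off the natural parameter space. -/
noncomputable def ecumulant {p : ℕ} (ν : Measure (EuclideanSpace ℝ (Fin p)))
    (θ : EuclideanSpace ℝ (Fin p)) : EReal :=
  if partitionFn ν θ = ⊤ then ⊤ else ((cumulant ν θ : ℝ) : EReal)

/-- The member of the full exponential family generated by `ν` with natural parameter `θ`:
the measure with density `x ↦ exp(⟪x, θ⟫ − c(θ))` with respect to `ν`. -/
noncomputable def expFam {p : ℕ} (ν : Measure (EuclideanSpace ℝ (Fin p)))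
    (θ : EuclideanSpace ℝ (Fin p)) : Measure (EuclideanSpace ℝ (Fin p)) :=
  ν.withDensity fun x => ENNReal.ofReal (Real.exp (⟪x, θ⟫ - cumulant ν θ))

/-- `K` is the convex support of `ν`: the smallest closed convex set of full `ν`-measure. -/
def IsConvexSupport {p : ℕ} (ν : Measure (EuclideanSpace ℝ (Fin p)))
    (K : Set (EuclideanSpace ℝ (Fin p))) : Prop :=
  IsClosed K ∧ Convex ℝ K ∧ ν Kᶜ = 0 ∧
    ∀ C : Set (EuclideanSpace ℝ (Fin p)), IsClosed C → Convex ℝ C → ν Cᶜ = 0 → K ⊆ C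

theorem integrable_exp_of_partitionFn {p : ℕ} (ν : Measure (EuclideanSpace ℝ (Fin p)))
    (θ : EuclideanSpace ℝ (Fin p)) :
    partitionFn ν θ < ⊤ ↔ Integrable (fun x => Real.exp ⟪x, θ⟫) ν := by
  have hm : AEStronglyMeasurable (fun x : EuclideanSpace ℝ (Fin p) => Real.exp ⟪x, θ⟫) ν :=
    (by fun_prop : Continuous fun x : EuclideanSpace ℝ (Fin p) =>
      Real.exp ⟪x, θ⟫).aestronglyMeasurable
  rw [Integrable, and_iff_right hm,
    hasFiniteIntegral_iff_ofReal (ae_of_all _ fun x => (Real.exp_pos _).le)]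
  rfl

theorem exp_cumulant_eq {p : ℕ} (ν : Measure (EuclideanSpace ℝ (Fin p))) (hν : ν ≠ 0)
    (θ : EuclideanSpace ℝ (Fin p)) (h : partitionFn ν θ < ⊤) :
    Real.exp (cumulant ν θ) = ∫ x, Real.exp ⟪x, θ⟫ ∂ν := by
  have hi := (integrable_exp_of_partitionFn ν θ).1 h
  have : NeZero ν := ⟨hν⟩
  have e : (partitionFn ν θ).toReal = ∫ x, Real.exp ⟪x, θ⟫ ∂ν := by
    rw [integral_eq_lintegral_of_nonneg_ae (ae_of_all _ fun x => (Real.exp_pos _).le)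
      hi.aestronglyMeasurable]
    rfl
  rw [cumulant, e, Real.exp_log (integral_exp_pos hi)]

/-- If `θ̂₁` and `θ̂₂` both maximize the log likelihood `θ ↦ ⟪y, θ⟫ − c(θ)` over the natural
parameter space, where `y` lies in the convex support, then `θ̂₁ − θ̂₂` is a direction of
constancy (`⟪x − y, θ̂₁ − θ̂₂⟫ = 0` for `ν`-a.e. `x`) and the two exponential family measures
coincide. -/
theorem mle_diff_direction_of_constancy {p : ℕ} (hp : 0 < p)
    (ν : Measure (EuclideanSpace ℝ (Fin p))) [SigmaFinite ν] (hν : ν ≠ 0)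
    (hΘ : {θ : EuclideanSpace ℝ (Fin p) | partitionFn ν θ < ⊤}.Nonempty)
    (K : Set (EuclideanSpace ℝ (Fin p))) (hK : IsConvexSupport ν K)
    (y : EuclideanSpace ℝ (Fin p)) (hy : y ∈ K)
    (θhat₁ θhat₂ : EuclideanSpace ℝ (Fin p))
    (h₁ : partitionFn ν θhat₁ < ⊤) (h₂ : partitionFn ν θhat₂ < ⊤)
    (hmax₁ : ∀ θ : EuclideanSpace ℝ (Fin p), partitionFn ν θ < ⊤ →
      ⟪y, θ⟫ - cumulant ν θ ≤ ⟪y, θhat₁⟫ - cumulant ν θhat₁)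
    (hmax₂ : ∀ θ : EuclideanSpace ℝ (Fin p), partitionFn ν θ < ⊤ →
      ⟪y, θ⟫ - cumulant ν θ ≤ ⟪y, θhat₂⟫ - cumulant ν θhat₂) :
    (∀ᵐ x ∂ν, ⟪x - y, θhat₁ - θhat₂⟫ = 0) ∧ expFam ν θhat₁ = expFam ν θhat₂ := by
  have i₁ := (integrable_exp_of_partitionFn ν θhat₁).1 h₁
  have i₂ := (integrable_exp_of_partitionFn ν θhat₂).1 h₂
  have e₁ := exp_cumulant_eq ν hν θhat₁ h₁
  have e₂ := exp_cumulant_eq ν hν θhat₂ h₂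
  have hl : ⟪y, θhat₁⟫ - cumulant ν θhat₁ = ⟪y, θhat₂⟫ - cumulant ν θhat₂ :=
    le_antisymm (hmax₂ _ h₁) (hmax₁ _ h₂)
  set c₁ := cumulant ν θhat₁ with hc₁
  set c₂ := cumulant ν θhat₂ with hc₂
  set m : EuclideanSpace ℝ (Fin p) := (1 / 2 : ℝ) • (θhat₁ + θhat₂) with hm
  have inm : ∀ x : EuclideanSpace ℝ (Fin p), ⟪x, m⟫ = (⟪x, θhat₁⟫ + ⟪x, θhat₂⟫) / 2 := by
    intro x
    rw [hm, inner_smul_right, inner_add_right]; ring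
  have key : ∀ x : EuclideanSpace ℝ (Fin p),
      Real.exp ⟪x, m⟫ = Real.exp (⟪x, θhat₁⟫ / 2) * Real.exp (⟪x, θhat₂⟫ / 2) := by
    intro x
    rw [inm, ← Real.exp_add]; congr 1; ring
  have sq : ∀ t : ℝ, Real.exp t = Real.exp (t / 2) ^ 2 := by
    intro t
    rw [← Real.exp_nat_mul]; congr 1; push_cast; ring
  have im : Integrable (fun x => Real.exp ⟪x, m⟫) ν := by
    refine (i₁.add i₂).mono' (by
      exact (by fun_prop : Continuous fun x : EuclideanSpace ℝ (Fin p) =>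
        Real.exp ⟪x, m⟫).aestronglyMeasurable) (ae_of_all _ fun x => ?_)
    rw [Real.norm_of_nonneg (Real.exp_pos _).le, key, Pi.add_apply, sq ⟪x, θhat₁⟫,
      sq ⟪x, θhat₂⟫]
    nlinarith [sq_nonneg (Real.exp (⟪x, θhat₁⟫ / 2) - Real.exp (⟪x, θhat₂⟫ / 2)),
      sq_nonneg (Real.exp (⟪x, θhat₁⟫ / 2)), sq_nonneg (Real.exp (⟪x, θhat₂⟫ / 2))]
  have hmΘ := (integrable_exp_of_partitionFn ν m).2 im
  have em := exp_cumulant_eq ν hν m hmΘ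
  have hcm : (c₁ + c₂) / 2 ≤ cumulant ν m := by
    have a := hmax₁ m hmΘ
    rw [inm] at a
    linarith
  have hfun : ∀ x : EuclideanSpace ℝ (Fin p),
      (Real.exp ((⟪x, θhat₁⟫ - c₁) / 2) - Real.exp ((⟪x, θhat₂⟫ - c₂) / 2)) ^ 2 =
      Real.exp (-c₁) * Real.exp ⟪x, θhat₁⟫ + Real.exp (-c₂) * Real.exp ⟪x, θhat₂⟫ -
        2 * Real.exp (-((c₁ + c₂) / 2)) * Real.exp ⟪x, m⟫ := by
    intro x
    rw [sub_sq, ← sq, ← sq, mul_assoc, mul_assoc, ← Real.exp_add, ← Real.exp_add,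
      ← Real.exp_add, ← Real.exp_add, inm]
    ring_nf
  have j₁ := i₁.const_mul (Real.exp (-c₁))
  have j₂ := i₂.const_mul (Real.exp (-c₂))
  have jm := im.const_mul (2 * Real.exp (-((c₁ + c₂) / 2)))
  have jj := (j₁.add j₂).sub jm
  have hint : Integrable (fun x =>
      (Real.exp ((⟪x, θhat₁⟫ - c₁) / 2) - Real.exp ((⟪x, θhat₂⟫ - c₂) / 2)) ^ 2) ν := by
    simp_rw [hfun]; exact jj
  have hle : ∫ x, (Real.exp ((⟪x, θhat₁⟫ - c₁) / 2) - Real.exp ((⟪x, θhat₂⟫ - c₂) / 2)) ^ 2 ∂ν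
      ≤ 0 := by
    simp_rw [hfun]
    rw [integral_sub (by exact j₁.add j₂) jm, integral_add j₁ j₂, integral_const_mul,
      integral_const_mul, integral_const_mul, ← e₁, ← e₂, ← em, mul_assoc, ← Real.exp_add,
      ← Real.exp_add, ← Real.exp_add]
    have : 1 ≤ Real.exp (-((c₁ + c₂) / 2) + cumulant ν m) :=
      Real.one_le_exp (by linarith)
    simp only [neg_add_cancel, Real.exp_zero]
    linarith
  have hz : ∀ᵐ x ∂ν, ⟪x, θhat₁⟫ - c₁ = ⟪x, θhat₂⟫ - c₂ := by
    have h0 := (integral_eq_zero_iff_of_nonneg (fun x => sq_nonneg _) hint).1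
      (le_antisymm hle (integral_nonneg fun x => sq_nonneg _))
    filter_upwards [h0] with x hx
    have := Real.exp_injective (sub_eq_zero.1 (pow_eq_zero_iff two_ne_zero |>.1 hx))
    linarith
  refine ⟨?_, ?_⟩
  · filter_upwards [hz] with x hx
    rw [inner_sub_left, inner_sub_right, inner_sub_right]
    linarith
  · unfold expFam
    refine withDensity_congr_ae ?_
    filter_upwards [hz] with x hx
    rw [← hc₁, ← hc₂, hx]
end

section
/- Let δ ∈ ℝ^p and y ∈ ℝ^p. The following are equivalent: (i) there exists θ ∈ Θ such that the function s ↦ ⟨y, θ + sδ⟩ − c(θ + sδ), with values in [−∞, ∞), is nondecreasing on ℝ; (ii) for all θ ∈ Θ the function s ↦ ⟨y, θ + sδ⟩ − c(θ + sδ) is nondecreasing on ℝ; (iii) ⟨x − y, δ⟩ ≤ 0 for ν-almost every x. -/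
open MeasureTheory Real Filter Topology Set
open scoped RealInnerProductSpace ENNReal

/-- The partition function recentred at `y`. -/
noncomputable def shiftedFn {p : ℕ} (ν : Measure (EuclideanSpace ℝ (Fin p)))
    (y θ : EuclideanSpace ℝ (Fin p)) : ℝ≥0∞ :=
  ∫⁻ x, ENNReal.ofReal (Real.exp ⟪x - y, θ⟫) ∂ν

lemma partitionFn_ne_zero {p : ℕ} (ν : Measure (EuclideanSpace ℝ (Fin p))) (hν : ν ≠ 0)
    (θ : EuclideanSpace ℝ (Fin p)) : partitionFn ν θ ≠ 0 := by
  intro h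
  unfold partitionFn at h
  rw [lintegral_eq_zero_iff (by fun_prop)] at h
  apply hν
  rw [← ae_eq_bot, ← Filter.eventually_false_iff_eq_bot]
  filter_upwards [h] with x hx
  have := Real.exp_pos ⟪x, θ⟫
  simp only [Pi.zero_apply, ENNReal.ofReal_eq_zero] at hx
  linarith

lemma shiftedFn_eq {p : ℕ} (ν : Measure (EuclideanSpace ℝ (Fin p)))
    (y θ : EuclideanSpace ℝ (Fin p)) :
    shiftedFn ν y θ = ENNReal.ofReal (Real.exp (-⟪y, θ⟫)) * partitionFn ν θ := by
  unfold shiftedFn partitionFn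
  rw [← lintegral_const_mul _ (by fun_prop)]
  congr 1 with x
  rw [← ENNReal.ofReal_mul (Real.exp_pos _).le, ← Real.exp_add, inner_sub_left]
  congr 2
  ring

lemma ecumulant_eq {p : ℕ} (ν : Measure (EuclideanSpace ℝ (Fin p))) (hν : ν ≠ 0)
    (θ : EuclideanSpace ℝ (Fin p)) : ecumulant ν θ = ENNReal.log (partitionFn ν θ) := by
  unfold ecumulant cumulant
  split_ifs with h
  · simp [h]
  · rw [ENNReal.log_pos_real (partitionFn_ne_zero ν hν θ) h]

lemma obj_eq {p : ℕ} (ν : Measure (EuclideanSpace ℝ (Fin p))) (hν : ν ≠ 0)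
    (y θ : EuclideanSpace ℝ (Fin p)) :
    ((⟪y, θ⟫ : ℝ) : EReal) - ecumulant ν θ = - ENNReal.log (shiftedFn ν y θ) := by
  have h : ENNReal.log (ENNReal.ofReal (Real.exp (-⟪y, θ⟫))) = ((-⟪y, θ⟫ : ℝ) : EReal) := by
    rw [ENNReal.log_ofReal_of_pos (Real.exp_pos _), Real.log_exp]
  rw [ecumulant_eq ν hν, shiftedFn_eq, ENNReal.log_mul_add, h,
    EReal.neg_add (Or.inl (EReal.coe_ne_bot _)) (Or.inl (EReal.coe_ne_top _)), EReal.coe_neg, neg_neg]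

lemma monotone_obj_iff {p : ℕ} (ν : Measure (EuclideanSpace ℝ (Fin p))) (hν : ν ≠ 0)
    (y θ δ : EuclideanSpace ℝ (Fin p)) :
    Monotone (fun s : ℝ => ((⟪y, θ + s • δ⟫ : ℝ) : EReal) - ecumulant ν (θ + s • δ)) ↔
      Antitone (fun s : ℝ => shiftedFn ν y (θ + s • δ)) := by
  simp only [obj_eq ν hν, Monotone, Antitone, EReal.neg_le_neg_iff, ENNReal.log_le_log_iff]

/-- Characterization of directions of recession: the following are equivalent. (i) For some
`θ` in the natural parameter space, `s ↦ ⟪y, θ + sδ⟫ − c(θ + sδ)` (valued in `[−∞, ∞)`) is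
nondecreasing; (ii) the same for all `θ` in the natural parameter space; (iii)
`⟪x − y, δ⟫ ≤ 0` for `ν`-a.e. `x`. -/
theorem direction_of_recession_tfae {p : ℕ} (hp : 0 < p)
    (ν : Measure (EuclideanSpace ℝ (Fin p))) [SigmaFinite ν] (hν : ν ≠ 0)
    (hΘ : {θ : EuclideanSpace ℝ (Fin p) | partitionFn ν θ < ⊤}.Nonempty)
    (δ y : EuclideanSpace ℝ (Fin p)) :
    List.TFAE
      [ ∃ θ : EuclideanSpace ℝ (Fin p), partitionFn ν θ < ⊤ ∧
          Monotone (fun s : ℝ =>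
            ((⟪y, θ + s • δ⟫ : ℝ) : EReal) - ecumulant ν (θ + s • δ)),
        ∀ θ : EuclideanSpace ℝ (Fin p), partitionFn ν θ < ⊤ →
          Monotone (fun s : ℝ =>
            ((⟪y, θ + s • δ⟫ : ℝ) : EReal) - ecumulant ν (θ + s • δ)),
        ∀ᵐ x ∂ν, ⟪x - y, δ⟫ ≤ 0 ] := by
  tfae_have 3 → 2 := by
    intro h θ _
    rw [monotone_obj_iff ν hν]
    intro s t hst
    refine lintegral_mono_ae ?_
    filter_upwards [h] with x hx
    refine ENNReal.ofReal_le_ofReal (Real.exp_le_exp.2 ?_)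
    simp only [inner_add_right, inner_smul_right]
    nlinarith
  tfae_have 2 → 1 := by
    intro h
    obtain ⟨θ, hθ⟩ := hΘ
    exact ⟨θ, hθ, h θ hθ⟩
  tfae_have 1 → 3 := by
    rintro ⟨θ, hθ, hm⟩
    rw [monotone_obj_iff ν hν] at hm
    set f : ℕ → EuclideanSpace ℝ (Fin p) → ℝ≥0∞ :=
      fun n x => ENNReal.ofReal (Real.exp ⟪x - y, θ + (n : ℝ) • δ⟫) with hf
    have hfm : ∀ n, Measurable (f n) := fun n => by simp only [hf]; fun_prop
    have hfin : shiftedFn ν y θ < ⊤ := by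
      rw [shiftedFn_eq]
      exact ENNReal.mul_lt_top ENNReal.ofReal_lt_top hθ
    have hle : ∀ n, ∫⁻ x, f n x ∂ν ≤ shiftedFn ν y θ := fun n => by
      have := hm (Nat.cast_nonneg (α := ℝ) n)
      simpa [shiftedFn, hf] using this
    have hlim : ∫⁻ x, liminf (fun n => f n x) atTop ∂ν < ⊤ := by
      refine lt_of_le_of_lt (lintegral_liminf_le hfm) (lt_of_le_of_lt ?_ hfin)
      refine (liminf_le_liminf (Eventually.of_forall hle)).trans ?_
      simp
    filter_upwards [ae_lt_top (Measurable.liminf hfm) hlim.ne] with x hx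
    by_contra! hpos
    have ht : Tendsto (fun n => f n x) atTop (𝓝 ⊤) := by
      refine ENNReal.tendsto_ofReal_atTop.comp (Real.tendsto_exp_atTop.comp ?_)
      simp only [inner_add_right, inner_smul_right]
      exact tendsto_atTop_add_const_left _ _
        (tendsto_natCast_atTop_atTop.atTop_mul_const hpos)
    rw [ht.liminf_eq] at hx
    exact lt_irrefl _ hx
  tfae_finish
end

section
/- Let δ ∈ ℝ^p and y ∈ K, where K is the convex support. Then ⟨x − y, δ⟩ ≤ 0 for ν-almost every x if and only if ⟨w − y, δ⟩ ≤ 0 for every w ∈ K, i.e. if and only if δ lies in the normal cone N_K(y). -/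
open MeasureTheory Real Filter Topology Set
open scoped RealInnerProductSpace ENNReal

/-- For `y` in the convex support `K`: `⟪x − y, δ⟫ ≤ 0` for `ν`-a.e. `x` iff
`⟪w − y, δ⟫ ≤ 0` for every `w ∈ K`, i.e. iff `δ` lies in the normal cone `N_K(y)`. -/
theorem ae_inner_le_iff_mem_normalCone {p : ℕ} (hp : 0 < p)
    (ν : Measure (EuclideanSpace ℝ (Fin p))) [SigmaFinite ν] (hν : ν ≠ 0)
    (K : Set (EuclideanSpace ℝ (Fin p))) (hK : IsConvexSupport ν K)
    (y : EuclideanSpace ℝ (Fin p)) (hy : y ∈ K)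
    (δ : EuclideanSpace ℝ (Fin p)) :
    (∀ᵐ x ∂ν, ⟪x - y, δ⟫ ≤ 0) ↔ ∀ w ∈ K, ⟪w - y, δ⟫ ≤ 0 := by
  obtain ⟨-, -, hK0, hmin⟩ := hK
  constructor
  · intro h
    refine hmin {x | ⟪x - y, δ⟫ ≤ 0} ?_ ?_ h
    · exact isClosed_le (by fun_prop) continuous_const
    · intro a ha b hb s t hs ht hst
      simp only [mem_setOf_eq] at *
      have e : s • a + t • b - y = s • (a - y) + t • (b - y) := by
        rw [smul_sub, smul_sub]
        have : y = s • y + t • y := by rw [← add_smul, hst, one_smul]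
        nth_rewrite 1 [this]
        abel
      rw [e, inner_add_left, real_inner_smul_left, real_inner_smul_left]
      have h1 := mul_nonneg hs (neg_nonneg.2 ha)
      have h2 := mul_nonneg ht (neg_nonneg.2 hb)
      linarith
  · intro h
    have hae : ∀ᵐ x ∂ν, x ∈ K := hK0
    filter_upwards [hae] with x hx using h x hx
end

section
/- For every θ ∈ Θ and every δ ∈ ℝ^p, the limit lim_{s→∞} (c(θ + sδ) − c(θ))/s exists in (−∞, ∞] and equals the support function value σ_K(δ) = sup_{x ∈ K} ⟨x, δ⟩, where K is the convex support of ν (equivalently, σ_K(δ) is the ν-essential supremum of x ↦ ⟨x, δ⟩). -/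
open MeasureTheory Real Filter Topology Set
open scoped RealInnerProductSpace ENNReal

theorem partitionFn_pos_aux {p : ℕ} (ν : Measure (EuclideanSpace ℝ (Fin p)))
    (θ : EuclideanSpace ℝ (Fin p)) (A : Set (EuclideanSpace ℝ (Fin p)))
    (hA : ν A ≠ 0) : 0 < ∫⁻ x in A, ENNReal.ofReal (Real.exp ⟪x, θ⟫) ∂ν := by
  rw [pos_iff_ne_zero]
  intro h
  rw [lintegral_eq_zero_iff (by fun_prop)] at h
  apply hA
  rw [← Measure.restrict_eq_zero, ← ae_eq_bot, ← Filter.eventually_false_iff_eq_bot]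
  filter_upwards [h] with x hx
  have : 0 < ENNReal.ofReal (Real.exp ⟪x, θ⟫) := ENNReal.ofReal_pos.2 (Real.exp_pos _)
  simp only [Pi.zero_apply] at hx
  exact this.ne' hx

theorem quotient_top_aux (c s : ℝ) (hs : 0 < s) :
    ((⊤ : EReal) - (c : EReal)) / (s : EReal) = ⊤ := by
  rw [EReal.top_sub_coe]
  exact EReal.top_div_of_pos_ne_top (by exact_mod_cast hs) (EReal.coe_ne_top s)

theorem integrand_split_aux {p : ℕ} (x θ δ : EuclideanSpace ℝ (Fin p)) (s : ℝ) :
    ENNReal.ofReal (Real.exp ⟪x, θ + s • δ⟫) =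
      ENNReal.ofReal (Real.exp (s * ⟪x, δ⟫)) * ENNReal.ofReal (Real.exp ⟪x, θ⟫) := by
  rw [← ENNReal.ofReal_mul (Real.exp_pos _).le, ← Real.exp_add, inner_add_right,
    real_inner_smul_right, add_comm]

theorem cumulant_recession_limit {p : ℕ} (hp : 0 < p)
    (ν : Measure (EuclideanSpace ℝ (Fin p))) [SigmaFinite ν] (hν : ν ≠ 0)
    (hΘ : {θ : EuclideanSpace ℝ (Fin p) | partitionFn ν θ < ⊤}.Nonempty)
    (K : Set (EuclideanSpace ℝ (Fin p))) (hK : IsConvexSupport ν K) :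
    ∀ θ : EuclideanSpace ℝ (Fin p), partitionFn ν θ < ⊤ →
      ∀ δ : EuclideanSpace ℝ (Fin p),
        Tendsto (fun s : ℝ => (ecumulant ν (θ + s • δ) - ecumulant ν θ) / (s : EReal))
          atTop (𝓝 (⨆ x ∈ K, ((⟪x, δ⟫ : ℝ) : EReal))) := by
  intro θ hθ δ
  obtain ⟨-, -, hK0, hKmin⟩ := hK
  have hpos : ∀ η, 0 < partitionFn ν η := by
    intro η
    have := partitionFn_pos_aux ν η Set.univ (by simpa using hν)
    simpa [partitionFn] using this
  have hcθ : ecumulant ν θ = ((cumulant ν θ : ℝ) : EReal) := by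
    simp [ecumulant, hθ.ne]
  rw [hcθ]
  have hKne : K.Nonempty := by
    rw [Set.nonempty_iff_ne_empty]
    rintro rfl
    simp at hK0
    exact hν hK0
  obtain ⟨x0, hx0⟩ := hKne
  rw [tendsto_order]
  constructor
  · intro a ha
    obtain ⟨b', hab, hb'⟩ := EReal.lt_iff_exists_real_btwn.1 ha
    obtain ⟨b, hbb, hb⟩ := EReal.lt_iff_exists_real_btwn.1 hb'
    have hbb : b' < b := by exact_mod_cast hbb
    set A : Set (EuclideanSpace ℝ (Fin p)) := {x | ⟪x, δ⟫ ≤ b}ᶜ with hAdef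
    have hcl : IsClosed {x : EuclideanSpace ℝ (Fin p) | ⟪x, δ⟫ ≤ b} :=
      isClosed_le (by fun_prop) continuous_const
    have hconv : Convex ℝ {x : EuclideanSpace ℝ (Fin p) | ⟪x, δ⟫ ≤ b} := by
      intro x hx y hy u v hu hv huv
      simp only [Set.mem_ofPred_eq, inner_add_left, real_inner_smul_left] at *
      have h1 := mul_le_mul_of_nonneg_left hx hu
      have h2 := mul_le_mul_of_nonneg_left hy hv
      have h3 : u * b + v * b = b := by rw [← add_mul, huv, one_mul]
      linarith
    have hA : ν A ≠ 0 := by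
      intro h
      have hsub := hKmin _ hcl hconv h
      have : (⨆ x ∈ K, ((⟪x, δ⟫ : ℝ) : EReal)) ≤ (b : EReal) :=
        iSup₂_le fun x hx => by exact_mod_cast hsub hx
      exact absurd hb (not_lt.2 this)
    set m : ℝ≥0∞ := ∫⁻ x in A, ENNReal.ofReal (Real.exp ⟪x, θ⟫) ∂ν with hm
    have hm0 : 0 < m := partitionFn_pos_aux ν θ A hA
    have hmtop : m < ⊤ := lt_of_le_of_lt (setLIntegral_le_lintegral _ _) hθ
    have hmr : 0 < m.toReal := ENNReal.toReal_pos hm0.ne' hmtop.ne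
    have hlim : Tendsto (fun s : ℝ => s * (b - b')) atTop atTop :=
      tendsto_id.atTop_mul_const (sub_pos.2 hbb)
    filter_upwards [eventually_gt_atTop 0,
      hlim.eventually_gt_atTop (cumulant ν θ - Real.log m.toReal)] with s hs hs2
    refine lt_of_lt_of_le hab ?_
    unfold ecumulant
    split_ifs with htop
    · rw [quotient_top_aux _ _ hs]; exact le_top
    · have hle : ENNReal.ofReal (Real.exp (s * b)) * m ≤ partitionFn ν (θ + s • δ) := by
        rw [hm, ← lintegral_const_mul _ (by fun_prop)]
        refine le_trans ?_ (setLIntegral_le_lintegral A _)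
        refine setLIntegral_mono' hcl.measurableSet.compl fun x hx => ?_
        rw [integrand_split_aux]
        have hx' : b < ⟪x, δ⟫ := by simpa [hAdef] using hx
        gcongr
      have hle2 := ENNReal.toReal_mono htop hle
      rw [ENNReal.toReal_mul, ENNReal.toReal_ofReal (Real.exp_pos _).le] at hle2
      have hlog := Real.log_le_log (by positivity) hle2
      rw [Real.log_mul (Real.exp_pos _).ne' hmr.ne', Real.log_exp] at hlog
      have : b' ≤ (cumulant ν (θ + s • δ) - cumulant ν θ) / s := by
        rw [le_div_iff₀ hs]
        unfold cumulant at *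
        nlinarith
      rw [← EReal.coe_sub, ← EReal.coe_div]
      exact_mod_cast this
  · intro a ha
    obtain ⟨r, hr, hra⟩ := EReal.lt_iff_exists_real_btwn.1 ha
    filter_upwards [eventually_gt_atTop 0] with s hs
    refine lt_of_le_of_lt ?_ hra
    have hae : ∀ᵐ x ∂ν, ⟪x, δ⟫ ≤ r := by
      have : ∀ᵐ x ∂ν, x ∈ K := hK0
      filter_upwards [this] with x hx
      have := (le_iSup₂ (f := fun x (_ : x ∈ K) => ((⟪x, δ⟫ : ℝ) : EReal)) x hx).trans hr.le
      exact_mod_cast this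
    have hle : partitionFn ν (θ + s • δ) ≤ ENNReal.ofReal (Real.exp (s * r)) * partitionFn ν θ := by
      unfold partitionFn
      rw [← lintegral_const_mul _ (by fun_prop)]
      refine lintegral_mono_ae ?_
      filter_upwards [hae] with x hx
      rw [integrand_split_aux]
      gcongr
    have hfin : ENNReal.ofReal (Real.exp (s * r)) * partitionFn ν θ ≠ ⊤ :=
      ENNReal.mul_ne_top ENNReal.ofReal_ne_top hθ.ne
    have htop : partitionFn ν (θ + s • δ) ≠ ⊤ := ne_top_of_le_ne_top hfin hle
    have hle2 := ENNReal.toReal_mono hfin hle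
    rw [ENNReal.toReal_mul, ENNReal.toReal_ofReal (Real.exp_pos _).le] at hle2
    have hlog := Real.log_le_log (ENNReal.toReal_pos (hpos _).ne' htop) hle2
    rw [Real.log_mul (Real.exp_pos _).ne' (ENNReal.toReal_pos (hpos _).ne' hθ.ne).ne',
      Real.log_exp] at hlog
    have : (cumulant ν (θ + s • δ) - cumulant ν θ) / s ≤ r := by
      rw [div_le_iff₀ hs]
      unfold cumulant
      linarith
    unfold ecumulant
    rw [if_neg htop]
    rw [← EReal.coe_sub, ← EReal.coe_div]
    exact_mod_cast this
end

section
/- Let y ∈ K, where K is the convex support. The supremum of the log likelihood l(θ) = ⟨y, θ⟩ − c(θ) over θ ∈ Θ is attained at some point of Θ if and only if every direction of recession is a direction of constancy, i.e. if and only if every δ ∈ ℝ^p such that ⟨x − y, δ⟩ ≤ 0 for ν-almost every x in fact satisfies ⟨x − y, δ⟩ = 0 for ν-almost every x. -/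
open MeasureTheory Real Filter Topology Set
open scoped RealInnerProductSpace ENNReal

/-- The reduced partition function `∫ exp⟪x - y, θ⟫ dν`. -/
noncomputable def redFn {p : ℕ} (ν : Measure (EuclideanSpace ℝ (Fin p)))
    (y θ : EuclideanSpace ℝ (Fin p)) : ℝ≥0∞ :=
  ∫⁻ x, ENNReal.ofReal (Real.exp ⟪x - y, θ⟫) ∂ν

theorem redFn_meas {p : ℕ} (y θ : EuclideanSpace ℝ (Fin p)) :
    Measurable fun x : EuclideanSpace ℝ (Fin p) => ENNReal.ofReal (Real.exp ⟪x - y, θ⟫) := by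
  fun_prop

theorem partitionFn_eq_redFn {p : ℕ} (ν : Measure (EuclideanSpace ℝ (Fin p)))
    (y θ : EuclideanSpace ℝ (Fin p)) :
    partitionFn ν θ = ENNReal.ofReal (Real.exp ⟪y, θ⟫) * redFn ν y θ := by
  unfold partitionFn redFn
  rw [← lintegral_const_mul _ (redFn_meas y θ)]
  congr 1
  funext x
  rw [← ENNReal.ofReal_mul (Real.exp_pos _).le, ← Real.exp_add, inner_sub_left]
  congr 2
  ring

theorem partitionFn_lt_top_iff {p : ℕ} (ν : Measure (EuclideanSpace ℝ (Fin p)))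
    (y θ : EuclideanSpace ℝ (Fin p)) :
    partitionFn ν θ < ⊤ ↔ redFn ν y θ < ⊤ := by
  rw [partitionFn_eq_redFn ν y θ]
  have h0 : ENNReal.ofReal (Real.exp ⟪y, θ⟫) ≠ 0 := by simp [Real.exp_pos]
  constructor
  · intro h
    by_contra h'
    rw [not_lt_top_iff.mp h', ENNReal.mul_top h0] at h
    exact lt_irrefl _ h
  · intro h
    exact ENNReal.mul_lt_top ENNReal.ofReal_lt_top h

theorem redFn_pos {p : ℕ} (ν : Measure (EuclideanSpace ℝ (Fin p))) (hν : ν ≠ 0)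
    (y θ : EuclideanSpace ℝ (Fin p)) : redFn ν y θ ≠ 0 := by
  intro h
  rw [redFn, lintegral_eq_zero_iff (redFn_meas y θ)] at h
  apply hν
  rw [← ae_eq_bot, ← Filter.eventually_false_iff_eq_bot]
  filter_upwards [h] with x hx
  have := Real.exp_pos ⟪x - y, θ⟫
  simp at hx
  linarith

theorem loglik_eq {p : ℕ} (ν : Measure (EuclideanSpace ℝ (Fin p))) (hν : ν ≠ 0)
    (y θ : EuclideanSpace ℝ (Fin p)) (h : redFn ν y θ < ⊤) :
    ⟪y, θ⟫ - cumulant ν θ = - Real.log (redFn ν y θ).toReal := by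
  have hpos := ENNReal.toReal_pos (redFn_pos ν hν y θ) h.ne
  rw [cumulant, partitionFn_eq_redFn ν y θ, ENNReal.toReal_mul,
    ENNReal.toReal_ofReal (Real.exp_pos _).le, Real.log_mul (Real.exp_pos _).ne' hpos.ne',
    Real.log_exp]
  ring

theorem loglik_le_iff {p : ℕ} (ν : Measure (EuclideanSpace ℝ (Fin p))) (hν : ν ≠ 0)
    (y θ η : EuclideanSpace ℝ (Fin p)) (h : redFn ν y θ < ⊤) (h' : redFn ν y η < ⊤) :
    ⟪y, θ⟫ - cumulant ν θ ≤ ⟪y, η⟫ - cumulant ν η ↔ redFn ν y η ≤ redFn ν y θ := by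
  have hpos := ENNReal.toReal_pos (redFn_pos ν hν y θ) h.ne
  have hpos' := ENNReal.toReal_pos (redFn_pos ν hν y η) h'.ne
  rw [loglik_eq ν hν y θ h, loglik_eq ν hν y η h', neg_le_neg_iff,
    Real.log_le_log_iff hpos' hpos, ENNReal.toReal_le_toReal h'.ne h.ne]

theorem redFn_fatou {p : ℕ} (ν : Measure (EuclideanSpace ℝ (Fin p)))
    (y : EuclideanSpace ℝ (Fin p)) (u : ℕ → EuclideanSpace ℝ (Fin p)) (M : ℝ≥0∞)
    (hu : ∀ n, redFn ν y (u n) ≤ M) :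
    ∫⁻ x, liminf (fun n => ENNReal.ofReal (Real.exp ⟪x - y, u n⟫)) atTop ∂ν ≤ M := by
  refine (lintegral_liminf_le fun n => redFn_meas y (u n)).trans ?_
  refine (liminf_le_liminf (v := fun _ => M) (Eventually.of_forall hu)).trans ?_
  simp

theorem redFn_isClosed {p : ℕ} (ν : Measure (EuclideanSpace ℝ (Fin p)))
    (y : EuclideanSpace ℝ (Fin p)) (M : ℝ≥0∞) : IsClosed {θ | redFn ν y θ ≤ M} := by
  apply IsSeqClosed.isClosed
  intro u θ hu hlim
  have := redFn_fatou ν y u M hu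
  refine le_trans (le_of_eq ?_) this
  unfold redFn
  congr 1
  funext x
  refine (Tendsto.liminf_eq ?_).symm
  refine ENNReal.tendsto_ofReal ((Real.continuous_exp.tendsto _).comp ?_)
  exact tendsto_const_nhds.inner hlim

/-- The space of directions of constancy. -/
def constSpace {p : ℕ} (ν : Measure (EuclideanSpace ℝ (Fin p)))
    (y : EuclideanSpace ℝ (Fin p)) : Submodule ℝ (EuclideanSpace ℝ (Fin p)) where
  carrier := {δ | ∀ᵐ x ∂ν, ⟪x - y, δ⟫ = 0}
  add_mem' := by
    intro a b ha hb
    simp only [Set.mem_setOf_eq] at ha hb ⊢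
    filter_upwards [ha, hb] with x h1 h2
    rw [inner_add_right, h1, h2, add_zero]
  zero_mem' := by simp
  smul_mem' := by
    intro c a ha
    simp only [Set.mem_setOf_eq] at ha ⊢
    filter_upwards [ha] with x h1
    rw [inner_smul_right, h1, mul_zero]

theorem redFn_add_const {p : ℕ} (ν : Measure (EuclideanSpace ℝ (Fin p)))
    (y θ δ : EuclideanSpace ℝ (Fin p)) (h : δ ∈ constSpace ν y) :
    redFn ν y (θ + δ) = redFn ν y θ := by
  apply lintegral_congr_ae
  have h' : ∀ᵐ x ∂ν, ⟪x - y, δ⟫ = 0 := h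
  filter_upwards [h'] with x hx
  rw [inner_add_right, hx, add_zero]

theorem exists_orth {p : ℕ} (ν : Measure (EuclideanSpace ℝ (Fin p)))
    (y θ : EuclideanSpace ℝ (Fin p)) :
    ∃ η ∈ (constSpace ν y)ᗮ, redFn ν y η = redFn ν y θ := by
  obtain ⟨a, ha, b, hb, rfl⟩ := (constSpace ν y).exists_add_mem_mem_orthogonal θ
  exact ⟨b, hb, by rw [add_comm, redFn_add_const ν y b a ha]⟩

theorem level_bounded {p : ℕ} (ν : Measure (EuclideanSpace ℝ (Fin p)))
    (y : EuclideanSpace ℝ (Fin p)) (M : ℝ≥0∞) (hM : M < ⊤)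
    (H : ∀ δ : EuclideanSpace ℝ (Fin p),
        (∀ᵐ x ∂ν, ⟪x - y, δ⟫ ≤ 0) → (∀ᵐ x ∂ν, ⟪x - y, δ⟫ = 0)) :
    Bornology.IsBounded {θ | θ ∈ (constSpace ν y)ᗮ ∧ redFn ν y θ ≤ M} := by
  by_contra hb
  have hex : ∀ n : ℕ, ∃ θ, (θ ∈ (constSpace ν y)ᗮ ∧ redFn ν y θ ≤ M) ∧ (n : ℝ) < ‖θ‖ := by
    intro n
    by_contra hcon
    push Not at hcon
    exact hb (isBounded_iff_forall_norm_le.mpr ⟨n, fun θ hθ => hcon θ hθ⟩)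
  choose u hu hun using hex
  have hpos : ∀ n, 0 < ‖u n‖ := fun n => lt_of_le_of_lt (Nat.cast_nonneg n) (hun n)
  have hsph : ∀ n, (‖u n‖⁻¹ • u n) ∈ Metric.sphere (0 : EuclideanSpace ℝ (Fin p)) 1 := by
    intro n
    simp [norm_smul, (hpos n).ne']
  obtain ⟨δ, hδ, φ, hφ, hlim⟩ := (isCompact_sphere _ _).tendsto_subseq hsph
  have hδo : δ ∈ (constSpace ν y)ᗮ := by
    refine (constSpace ν y).isClosed_orthogonal.mem_of_tendsto hlim (Eventually.of_forall ?_)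
    intro n
    exact Submodule.smul_mem _ _ (hu _).1
  have hδN : δ ∉ constSpace ν y := by
    intro hN
    have h0 : ⟪δ, δ⟫ = 0 := Submodule.inner_right_of_mem_orthogonal hN hδo
    rw [inner_self_eq_zero] at h0
    simp [h0] at hδ
  have hnr : ¬ ∀ᵐ x ∂ν, ⟪x - y, δ⟫ ≤ 0 := fun h => hδN (H δ h)
  have hF := redFn_fatou ν y (u ∘ φ) M (fun n => (hu _).2)
  have hfin := ae_lt_top
    (Measurable.liminf fun n => redFn_meas y ((u ∘ φ) n)) (lt_of_le_of_lt hF hM).ne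
  apply hnr
  filter_upwards [hfin] with x hx
  by_contra hxp
  push Not at hxp
  refine hx.ne (Tendsto.liminf_eq ?_)
  refine ENNReal.tendsto_ofReal_atTop.comp (Real.tendsto_exp_atTop.comp ?_)
  have h1 : Tendsto (fun n => ⟪x - y, ‖u (φ n)‖⁻¹ • u (φ n)⟫) atTop (𝓝 ⟪x - y, δ⟫) :=
    tendsto_const_nhds.inner hlim
  have h2 : Tendsto (fun n => ‖u (φ n)‖) atTop atTop := by
    refine (tendsto_atTop_mono (fun n => (hun n).le) tendsto_natCast_atTop_atTop).comp
      hφ.tendsto_atTop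
  refine (h2.atTop_mul_pos hxp h1).congr fun n => ?_
  rw [inner_smul_right, ← mul_assoc, mul_inv_cancel₀ (hpos _).ne', one_mul]
  rfl

/-- For `y` in the convex support, the log likelihood `θ ↦ ⟪y, θ⟫ − c(θ)` attains its
supremum over the natural parameter space iff every direction of recession is a direction of
constancy. -/
theorem mle_exists_iff_recession_imp_constancy {p : ℕ} (hp : 0 < p)
    (ν : Measure (EuclideanSpace ℝ (Fin p))) [SigmaFinite ν] (hν : ν ≠ 0)
    (hΘ : {θ : EuclideanSpace ℝ (Fin p) | partitionFn ν θ < ⊤}.Nonempty)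
    (K : Set (EuclideanSpace ℝ (Fin p))) (hK : IsConvexSupport ν K)
    (y : EuclideanSpace ℝ (Fin p)) (hy : y ∈ K) :
    (∃ θhat : EuclideanSpace ℝ (Fin p), partitionFn ν θhat < ⊤ ∧
        ∀ θ : EuclideanSpace ℝ (Fin p), partitionFn ν θ < ⊤ →
          ⟪y, θ⟫ - cumulant ν θ ≤ ⟪y, θhat⟫ - cumulant ν θhat) ↔
      ∀ δ : EuclideanSpace ℝ (Fin p),
        (∀ᵐ x ∂ν, ⟪x - y, δ⟫ ≤ 0) → (∀ᵐ x ∂ν, ⟪x - y, δ⟫ = 0) := by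
  constructor
  · rintro ⟨θ, hθ, hmax⟩ δ hδ
    have hf : redFn ν y θ < ⊤ := (partitionFn_lt_top_iff ν y θ).1 hθ
    have hle : ∀ᵐ x ∂ν, ENNReal.ofReal (Real.exp ⟪x - y, θ + δ⟫) ≤
        ENNReal.ofReal (Real.exp ⟪x - y, θ⟫) := by
      filter_upwards [hδ] with x hx
      apply ENNReal.ofReal_le_ofReal
      rw [Real.exp_le_exp, inner_add_right]
      linarith
    have hf' : redFn ν y (θ + δ) < ⊤ := lt_of_le_of_lt (lintegral_mono_ae hle) hf
    have hm := (loglik_le_iff ν hν y _ _ hf' hf).1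
      (hmax _ ((partitionFn_lt_top_iff ν y _).2 hf'))
    have heq := ae_eq_of_ae_le_of_lintegral_le hle hf'.ne (redFn_meas y θ).aemeasurable hm
    filter_upwards [heq] with x hx
    rw [ENNReal.ofReal_eq_ofReal_iff (Real.exp_pos _).le (Real.exp_pos _).le, Real.exp_eq_exp,
      inner_add_right] at hx
    linarith
  · intro H
    obtain ⟨θ₀, hθ₀⟩ := hΘ
    have hM : redFn ν y θ₀ < ⊤ := (partitionFn_lt_top_iff ν y θ₀).1 hθ₀
    set M := redFn ν y θ₀
    set L := {θ | θ ∈ (constSpace ν y)ᗮ ∧ redFn ν y θ ≤ M} with hL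
    have hcomp : IsCompact L := by
      refine Metric.isCompact_of_isClosed_isBounded ?_ (level_bounded ν y M hM H)
      exact (constSpace ν y).isClosed_orthogonal.inter (redFn_isClosed ν y M)
    have hne : L.Nonempty := by
      obtain ⟨η, h1, h2⟩ := exists_orth ν y θ₀
      exact ⟨η, h1, h2.le⟩
    have hlsc : LowerSemicontinuous (redFn ν y) :=
      lowerSemicontinuous_iff_isClosed_preimage.2 fun M => redFn_isClosed ν y M
    obtain ⟨θ, hθL, hmin⟩ := (hlsc.lowerSemicontinuousOn L).exists_isMinOn hne hcomp
    have hf : redFn ν y θ < ⊤ := lt_of_le_of_lt hθL.2 hM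
    refine ⟨θ, (partitionFn_lt_top_iff ν y θ).2 hf, fun η hη => ?_⟩
    have hη' := (partitionFn_lt_top_iff ν y η).1 hη
    rw [loglik_le_iff ν hν y η θ hη' hf]
    rcases le_total (redFn ν y η) M with h | h
    · obtain ⟨ζ, h1, h2⟩ := exists_orth ν y η
      rw [← h2]
      exact hmin ⟨h1, h2.le.trans h⟩
    · exact hθL.2.trans h
end

section
/- Let y ∈ ℝ^p and let δ ∈ ℝ^p be a direction of recession that is not a direction of constancy, i.e. ⟨x − y, δ⟩ ≤ 0 for ν-almost every x but it is not the case that ⟨x − y, δ⟩ = 0 for ν-almost every x. Then for every θ ∈ Θ the function s ↦ ⟨y, θ + sδ⟩ − c(θ + sδ) is strictly increasing on the interval {s ∈ ℝ : c(θ + sδ) < ∞}. -/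
open MeasureTheory Real Filter Topology Set
open scoped RealInnerProductSpace ENNReal

/-- If `δ` is a direction of recession that is not a direction of constancy, then for every
`θ` in the natural parameter space, `s ↦ ⟪y, θ + sδ⟫ − c(θ + sδ)` is strictly increasing on
the interval where `c(θ + sδ)` is finite. -/
theorem loglik_strictMonoOn_of_recession_not_constancy {p : ℕ} (hp : 0 < p)
    (ν : Measure (EuclideanSpace ℝ (Fin p))) [SigmaFinite ν] (hν : ν ≠ 0)
    (hΘ : {θ : EuclideanSpace ℝ (Fin p) | partitionFn ν θ < ⊤}.Nonempty)
    (y δ : EuclideanSpace ℝ (Fin p))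
    (hrec : ∀ᵐ x ∂ν, ⟪x - y, δ⟫ ≤ 0)
    (hncon : ¬ ∀ᵐ x ∂ν, ⟪x - y, δ⟫ = 0) :
    ∀ θ : EuclideanSpace ℝ (Fin p), partitionFn ν θ < ⊤ →
      StrictMonoOn (fun s : ℝ => ⟪y, θ + s • δ⟫ - cumulant ν (θ + s • δ))
        {s : ℝ | partitionFn ν (θ + s • δ) < ⊤} := by
  intro θ _ a ha b hb hab
  simp only [mem_ofPred_eq] at ha hb
  have key : ∀ x : EuclideanSpace ℝ (Fin p),
      ⟪x, θ + b • δ⟫ = (b - a) * ⟪x - y, δ⟫ + ((b - a) * ⟪y, δ⟫ + ⟪x, θ + a • δ⟫) := by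
    intro x
    simp only [inner_add_right, inner_sub_left, real_inner_smul_right]
    ring
  have hm : ∀ η : EuclideanSpace ℝ (Fin p),
      Measurable fun x : EuclideanSpace ℝ (Fin p) => ENNReal.ofReal (Real.exp ⟪x, η⟫) := by
    intro η
    fun_prop
  have hpos : ∀ η : EuclideanSpace ℝ (Fin p), partitionFn ν η ≠ 0 := by
    intro η h
    rw [partitionFn, lintegral_eq_zero_iff (hm η)] at h
    apply hν
    rw [← ae_eq_bot, ← Filter.eventually_false_iff_eq_bot]
    filter_upwards [h] with x hx
    simp only [Pi.zero_apply, ENNReal.ofReal_eq_zero] at hx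
    exact absurd (Real.exp_pos _) (not_lt.mpr hx)
  have hmul : ∫⁻ x, ENNReal.ofReal (Real.exp ((b - a) * ⟪y, δ⟫ + ⟪x, θ + a • δ⟫)) ∂ν
      = ENNReal.ofReal (Real.exp ((b - a) * ⟪y, δ⟫)) * partitionFn ν (θ + a • δ) := by
    rw [partitionFn, ← lintegral_const_mul _ (hm _)]
    congr 1
    ext x
    rw [Real.exp_add, ENNReal.ofReal_mul (Real.exp_pos _).le]
  have hba : 0 < b - a := sub_pos.mpr hab
  have hlt : partitionFn ν (θ + b • δ)
      < ENNReal.ofReal (Real.exp ((b - a) * ⟪y, δ⟫)) * partitionFn ν (θ + a • δ) := by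
    rw [← hmul]
    refine lintegral_strict_mono_of_ae_le_of_frequently_ae_lt (by fun_prop) hb.ne ?_ ?_
    · filter_upwards [hrec] with x hx
      apply ENNReal.ofReal_le_ofReal
      apply Real.exp_le_exp.mpr
      rw [key x]
      nlinarith
    · intro hcon
      apply hncon
      filter_upwards [hrec, hcon] with x hx hx2
      by_contra hne
      apply hx2
      have h0 : ⟪x - y, δ⟫ < 0 := lt_of_le_of_ne hx hne
      refine ne_of_lt ((ENNReal.ofReal_lt_ofReal_iff (Real.exp_pos _)).mpr (Real.exp_lt_exp.mpr ?_))
      rw [key x]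
      nlinarith
  have hZa : 0 < (partitionFn ν (θ + a • δ)).toReal := ENNReal.toReal_pos (hpos _) ha.ne
  have hZb : 0 < (partitionFn ν (θ + b • δ)).toReal := ENNReal.toReal_pos (hpos _) hb.ne
  have hr := ENNReal.toReal_strict_mono (ENNReal.mul_ne_top ENNReal.ofReal_ne_top ha.ne) hlt
  rw [ENNReal.toReal_mul, ENNReal.toReal_ofReal (Real.exp_pos _).le] at hr
  have hl := Real.log_lt_log hZb hr
  rw [Real.log_mul (Real.exp_pos _).ne' hZa.ne', Real.log_exp] at hl
  simp only [cumulant, inner_add_right, real_inner_smul_right]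
  linarith
end

section
/- Let y ∈ ℝ^p, let δ ∈ ℝ^p satisfy ⟨x − y, δ⟩ ≤ 0 for ν-almost every x, and set H = {x ∈ ℝ^p : ⟨x − y, δ⟩ = 0}. Then for every θ ∈ Θ and every s ≥ 0 one has θ + sδ ∈ Θ and μ_{θ+sδ}(H) = exp(s⟨y, δ⟩ − c(θ + sδ) + c(θ)) · μ_θ(H). -/
open MeasureTheory Real Filter Topology Set
open scoped RealInnerProductSpace ENNReal

/-- If `δ` is a direction of recession (`⟪x − y, δ⟫ ≤ 0` for `ν`-a.e. `x`) and
`H = {x | ⟪x − y, δ⟫ = 0}`, then for every `θ` in the natural parameter space and every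
`s ≥ 0`: `θ + sδ` is in the natural parameter space and
`μ_{θ+sδ}(H) = exp(s⟪y, δ⟫ − c(θ + sδ) + c(θ)) · μ_θ(H)`. -/
theorem expFam_measure_hyperplane {p : ℕ} (hp : 0 < p)
    (ν : Measure (EuclideanSpace ℝ (Fin p))) [SigmaFinite ν] (hν : ν ≠ 0)
    (hΘ : {θ : EuclideanSpace ℝ (Fin p) | partitionFn ν θ < ⊤}.Nonempty)
    (y δ : EuclideanSpace ℝ (Fin p))
    (hrec : ∀ᵐ x ∂ν, ⟪x - y, δ⟫ ≤ 0)
    (H : Set (EuclideanSpace ℝ (Fin p)))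
    (hH : H = {x : EuclideanSpace ℝ (Fin p) | ⟪x - y, δ⟫ = 0}) :
    ∀ θ : EuclideanSpace ℝ (Fin p), partitionFn ν θ < ⊤ → ∀ s : ℝ, 0 ≤ s →
      partitionFn ν (θ + s • δ) < ⊤ ∧
        expFam ν (θ + s • δ) H =
          ENNReal.ofReal
              (Real.exp (s * ⟪y, δ⟫ - cumulant ν (θ + s • δ) + cumulant ν θ)) *
            expFam ν θ H := by
  intro θ hθ s hs
  have hmeas : MeasurableSet H := by
    rw [hH]
    exact (isClosed_eq (by fun_prop) continuous_const).measurableSet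
  constructor
  · have hle : partitionFn ν (θ + s • δ) ≤
        ENNReal.ofReal (Real.exp (s * ⟪y, δ⟫)) * partitionFn ν θ := by
      unfold partitionFn
      rw [← lintegral_const_mul' _ _ ENNReal.ofReal_ne_top]
      apply lintegral_mono_ae
      filter_upwards [hrec] with x hx
      rw [← ENNReal.ofReal_mul (Real.exp_pos _).le, ← Real.exp_add]
      apply ENNReal.ofReal_le_ofReal
      apply Real.exp_le_exp.mpr
      rw [inner_add_right, real_inner_smul_right]
      rw [inner_sub_left] at hx
      nlinarith
    exact lt_of_le_of_lt hle (ENNReal.mul_lt_top ENNReal.ofReal_lt_top hθ)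
  · unfold expFam
    rw [withDensity_apply _ hmeas, withDensity_apply _ hmeas,
      ← lintegral_const_mul' _ _ ENNReal.ofReal_ne_top]
    apply setLIntegral_congr_fun hmeas
    intro x hx
    rw [hH, Set.mem_setOf_eq, inner_sub_left, sub_eq_zero] at hx
    simp only
    rw [← ENNReal.ofReal_mul (Real.exp_pos _).le, ← Real.exp_add,
      inner_add_right, real_inner_smul_right, hx]
    congr 2
    ring
end

section
/- Let y ∈ ℝ^p, let δ ∈ ℝ^p satisfy ⟨x − y, δ⟩ ≤ 0 for ν-almost every x, set H = {x ∈ ℝ^p : ⟨x − y, δ⟩ = 0}, and assume ν(H) > 0. Then for every θ ∈ Θ and every x ∈ ℝ^p the density exp(⟨x, θ + sδ⟩ − c(θ + sδ)) converges as s → ∞ to: 0 if ⟨x − y, δ⟩ < 0; exp(⟨x, θ⟩ − c(θ))/μ_θ(H) if ⟨x − y, δ⟩ = 0; and +∞ if ⟨x − y, δ⟩ > 0. -/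
open MeasureTheory Real Filter Topology Set
open scoped RealInnerProductSpace ENNReal

/-- Limits of the exponential family densities in a direction of recession `δ` with
`H = {x | ⟪x − y, δ⟫ = 0}` of positive `ν`-measure: as `s → ∞`, the density
`exp(⟪x, θ + sδ⟫ − c(θ + sδ))` tends to `0` where `⟪x − y, δ⟫ < 0`, to
`exp(⟪x, θ⟫ − c(θ))/μ_θ(H)` where `⟪x − y, δ⟫ = 0`, and to `+∞` where `⟪x − y, δ⟫ > 0`. -/
theorem expFam_density_limit {p : ℕ} (hp : 0 < p)
    (ν : Measure (EuclideanSpace ℝ (Fin p))) [SigmaFinite ν] (hν : ν ≠ 0)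
    (hΘ : {θ : EuclideanSpace ℝ (Fin p) | partitionFn ν θ < ⊤}.Nonempty)
    (y δ : EuclideanSpace ℝ (Fin p))
    (hrec : ∀ᵐ x ∂ν, ⟪x - y, δ⟫ ≤ 0)
    (H : Set (EuclideanSpace ℝ (Fin p)))
    (hH : H = {x : EuclideanSpace ℝ (Fin p) | ⟪x - y, δ⟫ = 0})
    (hHpos : 0 < ν H) :
    ∀ θ : EuclideanSpace ℝ (Fin p), partitionFn ν θ < ⊤ →
      ∀ x : EuclideanSpace ℝ (Fin p),
        (⟪x - y, δ⟫ < 0 →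
          Tendsto (fun s : ℝ => Real.exp (⟪x, θ + s • δ⟫ - cumulant ν (θ + s • δ)))
            atTop (𝓝 0)) ∧
        (⟪x - y, δ⟫ = 0 →
          Tendsto (fun s : ℝ => Real.exp (⟪x, θ + s • δ⟫ - cumulant ν (θ + s • δ)))
            atTop (𝓝 (Real.exp (⟪x, θ⟫ - cumulant ν θ) / (expFam ν θ H).toReal))) ∧
        (0 < ⟪x - y, δ⟫ →
          Tendsto (fun s : ℝ => Real.exp (⟪x, θ + s • δ⟫ - cumulant ν (θ + s • δ)))
            atTop atTop) := by
  intro θ hθ x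
  have hHm : MeasurableSet H := by
    rw [hH]
    exact (isClosed_eq (by fun_prop) continuous_const).measurableSet
  set G : ℝ → ℝ≥0∞ := fun s =>
    ∫⁻ z, ENNReal.ofReal (Real.exp (⟪z, θ⟫ + s * ⟪z - y, δ⟫)) ∂ν with hG
  set L : ℝ≥0∞ := ∫⁻ z in H, ENNReal.ofReal (Real.exp ⟪z, θ⟫) ∂ν with hL
  have hLtop : L ≠ ⊤ := ((setLIntegral_le_lintegral _ _).trans_lt hθ).ne
  have hL0 : L ≠ 0 := by
    have : 0 < L := by
      rw [hL, setLIntegral_pos_iff (by fun_prop)]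
      have : Function.support (fun z : EuclideanSpace ℝ (Fin p) =>
          ENNReal.ofReal (Real.exp ⟪z, θ⟫)) = univ := by
        ext z
        simp [Real.exp_pos]
      rw [this, univ_inter]
      exact hHpos
    exact this.ne'
  have hLpos : 0 < L.toReal := ENNReal.toReal_pos hL0 hLtop
  have hGlim : Tendsto G atTop (𝓝 L) := by
    rw [hL, ← lintegral_indicator hHm]
    refine tendsto_lintegral_filter_of_dominated_convergence
      (fun z => ENNReal.ofReal (Real.exp ⟪z, θ⟫)) ?_ ?_ hθ.ne ?_
    · exact Eventually.of_forall fun s => by fun_prop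
    · filter_upwards [eventually_ge_atTop (0 : ℝ)] with s hs
      filter_upwards [hrec] with z hz
      apply ENNReal.ofReal_le_ofReal
      apply Real.exp_le_exp.mpr
      nlinarith
    · filter_upwards [hrec] with z hz
      rcases hz.lt_or_eq with h | h
      · have hz' : z ∉ H := by
          rw [hH]
          exact h.ne
        rw [indicator_of_notMem hz']
        rw [← ENNReal.ofReal_zero]
        apply ENNReal.tendsto_ofReal
        apply Real.tendsto_exp_atBot.comp
        exact tendsto_atBot_add_const_left _ _ (tendsto_id.atTop_mul_const_of_neg h)
      · have hz' : z ∈ H := by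
          rw [hH]
          exact h
        rw [indicator_of_mem hz']
        simp [h]
  have hg : Tendsto (fun s => (G s).toReal) atTop (𝓝 L.toReal) :=
    (ENNReal.tendsto_toReal hLtop).comp hGlim
  have hgpos : ∀ᶠ s in atTop, 0 < (G s).toReal := hg.eventually (lt_mem_nhds hLpos)
  have hZ : ∀ s : ℝ, (partitionFn ν (θ + s • δ)).toReal
      = Real.exp (s * ⟪y, δ⟫) * (G s).toReal := by
    intro s
    have : partitionFn ν (θ + s • δ) = ENNReal.ofReal (Real.exp (s * ⟪y, δ⟫)) * G s := by
      rw [hG, partitionFn, ← lintegral_const_mul _ (by fun_prop)]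
      refine lintegral_congr fun z => ?_
      rw [← ENNReal.ofReal_mul (Real.exp_pos _).le, ← Real.exp_add]
      congr 2
      rw [inner_add_right, inner_smul_right, inner_sub_left]
      ring
    rw [this, ENNReal.toReal_mul, ENNReal.toReal_ofReal (Real.exp_pos _).le]
  have hdens : (fun s : ℝ => Real.exp (⟪x, θ⟫ + s * ⟪x - y, δ⟫) * ((G s).toReal)⁻¹) =ᶠ[atTop]
      (fun s : ℝ => Real.exp (⟪x, θ + s • δ⟫ - cumulant ν (θ + s • δ))) := by
    filter_upwards [hgpos] with s hs
    rw [cumulant, hZ, Real.exp_sub, Real.exp_log (mul_pos (Real.exp_pos _) hs)]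
    have : ⟪x, θ + s • δ⟫ = (⟪x, θ⟫ + s * ⟪x - y, δ⟫) + s * ⟪y, δ⟫ := by
      rw [inner_add_right, inner_smul_right, inner_sub_left]
      ring
    rw [this, Real.exp_add _ (s * ⟪y, δ⟫)]
    have := (Real.exp_pos (s * ⟪y, δ⟫)).ne'
    field_simp
  have hinv : Tendsto (fun s => ((G s).toReal)⁻¹) atTop (𝓝 (L.toReal)⁻¹) := hg.inv₀ hLpos.ne'
  refine ⟨fun h => ?_, fun h => ?_, fun h => ?_⟩
  · refine Tendsto.congr' hdens ?_
    have h1 : Tendsto (fun s : ℝ => Real.exp (⟪x, θ⟫ + s * ⟪x - y, δ⟫)) atTop (𝓝 0) :=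
      Real.tendsto_exp_atBot.comp
        (tendsto_atBot_add_const_left _ _ (tendsto_id.atTop_mul_const_of_neg h))
    simpa using h1.mul hinv
  · refine Tendsto.congr' hdens ?_
    have hZθ : 0 < (partitionFn ν θ).toReal :=
      hLpos.trans_le (ENNReal.toReal_mono hθ.ne (setLIntegral_le_lintegral _ _))
    have hE : (expFam ν θ H).toReal = Real.exp (- cumulant ν θ) * L.toReal := by
      have : expFam ν θ H = ENNReal.ofReal (Real.exp (- cumulant ν θ)) * L := by
        rw [expFam, withDensity_apply _ hHm, hL, ← lintegral_const_mul _ (by fun_prop)]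
        refine lintegral_congr fun z => ?_
        rw [← ENNReal.ofReal_mul (Real.exp_pos _).le, ← Real.exp_add]
        congr 2
        ring
      rw [this, ENNReal.toReal_mul, ENNReal.toReal_ofReal (Real.exp_pos _).le]
    have hval : Real.exp (⟪x, θ⟫ - cumulant ν θ) / (expFam ν θ H).toReal
        = Real.exp ⟪x, θ⟫ * (L.toReal)⁻¹ := by
      rw [hE, sub_eq_add_neg, Real.exp_add]
      have := (Real.exp_pos (- cumulant ν θ)).ne'
      field_simp
    rw [hval]
    simp only [h, mul_zero, add_zero]
    exact hinv.const_mul _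
  · refine Tendsto.congr' hdens ?_
    have h1 : Tendsto (fun s : ℝ => Real.exp (⟪x, θ⟫ + s * ⟪x - y, δ⟫)) atTop atTop :=
      Real.tendsto_exp_atTop.comp
        (tendsto_atTop_add_const_left _ _ (tendsto_id.atTop_mul_const h))
    exact h1.atTop_mul_pos (inv_pos.mpr hLpos) hinv
end

section
/- Let y ∈ ℝ^p, let δ ∈ ℝ^p be a direction of recession that is not a direction of constancy (⟨x − y, δ⟩ ≤ 0 for ν-almost every x but not ⟨x − y, δ⟩ = 0 for ν-almost every x), set H = {x ∈ ℝ^p : ⟨x − y, δ⟩ = 0}, and assume ν(H) > 0. Then for every θ ∈ Θ the function s ↦ μ_{θ+sδ}(H) is continuous and strictly increasing on [0, ∞), and μ_{θ+sδ}(H) → 1 as s → ∞. -/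
open MeasureTheory Real Filter Topology Set
open scoped RealInnerProductSpace ENNReal

/-- If `δ` is a direction of recession that is not a direction of constancy, and
`H = {x | ⟪x − y, δ⟫ = 0}` has positive `ν`-measure, then for every `θ` in the natural
parameter space, `s ↦ μ_{θ+sδ}(H)` is continuous and strictly increasing on `[0, ∞)` and
tends to `1` as `s → ∞`. -/
theorem expFam_measure_hyperplane_mono_tendsto_one {p : ℕ} (hp : 0 < p)
    (ν : Measure (EuclideanSpace ℝ (Fin p))) [SigmaFinite ν] (hν : ν ≠ 0)
    (hΘ : {θ : EuclideanSpace ℝ (Fin p) | partitionFn ν θ < ⊤}.Nonempty)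
    (y δ : EuclideanSpace ℝ (Fin p))
    (hrec : ∀ᵐ x ∂ν, ⟪x - y, δ⟫ ≤ 0)
    (hncon : ¬ ∀ᵐ x ∂ν, ⟪x - y, δ⟫ = 0)
    (H : Set (EuclideanSpace ℝ (Fin p)))
    (hH : H = {x : EuclideanSpace ℝ (Fin p) | ⟪x - y, δ⟫ = 0})
    (hHpos : 0 < ν H) :
    ∀ θ : EuclideanSpace ℝ (Fin p), partitionFn ν θ < ⊤ →
      ContinuousOn (fun s : ℝ => (expFam ν (θ + s • δ) H).toReal) (Set.Ici 0) ∧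
        StrictMonoOn (fun s : ℝ => (expFam ν (θ + s • δ) H).toReal) (Set.Ici 0) ∧
        Tendsto (fun s : ℝ => (expFam ν (θ + s • δ) H).toReal) atTop (𝓝 1) := by
  intro θ hθ
  have hd : Continuous (fun x : EuclideanSpace ℝ (Fin p) => ⟪x - y, δ⟫) := by fun_prop
  have hHm : MeasurableSet H := by
    rw [hH]; exact (isClosed_eq hd continuous_const).measurableSet
  have hHmem : ∀ x, x ∈ H ↔ ⟪x - y, δ⟫ = 0 := by intro x; rw [hH]; rfl
  set w : EuclideanSpace ℝ (Fin p) → ℝ := fun x => Real.exp ⟪x, θ⟫ with hw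
  have hwc : Continuous w := by fun_prop
  have hwi : Integrable w ν := by
    refine ⟨hwc.aestronglyMeasurable, ?_⟩
    rw [hasFiniteIntegral_iff_ofReal (Eventually.of_forall fun x => (Real.exp_pos _).le)]
    exact hθ
  set g : ℝ → EuclideanSpace ℝ (Fin p) → ℝ := fun s x => w x * Real.exp (s * ⟪x - y, δ⟫) with hg
  have hgc : ∀ s, Continuous (g s) := by intro s; fun_prop
  have hgpos : ∀ s x, 0 < g s x := fun s x => mul_pos (Real.exp_pos _) (Real.exp_pos _)
  have hgle : ∀ s, 0 ≤ s → ∀ᵐ x ∂ν, ‖g s x‖ ≤ w x := by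
    intro s hs
    filter_upwards [hrec] with x hx
    rw [Real.norm_of_nonneg (hgpos s x).le]
    have h1 : Real.exp (s * ⟪x - y, δ⟫) ≤ 1 :=
      Real.exp_le_one_iff.2 (mul_nonpos_of_nonneg_of_nonpos hs hx)
    exact mul_le_of_le_one_right (Real.exp_pos _).le h1
  have hgi : ∀ s, 0 ≤ s → Integrable (g s) ν := fun s hs =>
    hwi.mono' (hgc s).aestronglyMeasurable (hgle s hs)
  set G : ℝ → ℝ := fun s => ∫ x, g s x ∂ν with hG
  set A : ℝ := ∫ x in H, w x ∂ν with hA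
  have hApos : 0 < A := by
    rw [hA, setIntegral_pos_iff_support_of_nonneg_ae
      (Eventually.of_forall fun x => (Real.exp_pos _).le) hwi.integrableOn]
    have : Function.support w = univ := by
      ext x; simp [hw, Real.exp_ne_zero]
    rwa [this, univ_inter]
  have hgH : ∀ s, ∫ x in H, g s x ∂ν = A := by
    intro s
    refine setIntegral_congr_fun hHm fun x hx => ?_
    simp [hg, (hHmem x).1 hx]
  have hGA : ∀ s, 0 ≤ s → A ≤ G s := by
    intro s hs
    rw [← hgH s]
    exact setIntegral_le_integral (hgi s hs) (Eventually.of_forall fun x => (hgpos s x).le)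
  have hGpos : ∀ s, 0 ≤ s → 0 < G s := fun s hs => hApos.trans_le (hGA s hs)
  have hfac : ∀ s x, Real.exp ⟪x, θ + s • δ⟫ = Real.exp (s * ⟪y, δ⟫) * g s x := by
    intro s x
    simp only [hg, hw, ← Real.exp_add]
    congr 1
    rw [inner_add_right, inner_smul_right, inner_sub_left]
    ring
  have hZ : ∀ s, (partitionFn ν (θ + s • δ)).toReal = Real.exp (s * ⟪y, δ⟫) * G s := by
    intro s
    rw [partitionFn, ← integral_eq_lintegral_of_nonneg_ae
      (Eventually.of_forall fun x => (Real.exp_pos _).le)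
      (by fun_prop : Continuous _).aestronglyMeasurable]
    simp_rw [hfac]
    rw [integral_const_mul]
  have hform : ∀ s, 0 ≤ s → (expFam ν (θ + s • δ) H).toReal = A / G s := by
    intro s hs
    have hGs := hGpos s hs
    have hek := Real.exp_pos (s * ⟪y, δ⟫)
    rw [expFam, withDensity_apply _ hHm, ← integral_eq_lintegral_of_nonneg_ae
      (Eventually.of_forall fun x => (Real.exp_pos _).le)
      (by fun_prop : Continuous _).aestronglyMeasurable]
    have h1 : ∀ x, Real.exp (⟪x, θ + s • δ⟫ - cumulant ν (θ + s • δ)) = g s x / G s := by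
      intro x
      rw [Real.exp_sub, cumulant, hZ, Real.exp_log (mul_pos hek hGs), hfac]
      field_simp
    simp_rw [h1]
    rw [integral_div, hgH]
  have hGcont : ContinuousOn G (Set.Ici 0) := by
    refine continuousOn_of_dominated (bound := w)
      (fun s _ => (hgc s).aestronglyMeasurable) (fun s hs => hgle s hs) hwi
      (Eventually.of_forall fun x => ?_)
    exact (by fun_prop : Continuous fun s => g s x).continuousOn
  have hGanti : StrictAntiOn G (Set.Ici 0) := by
    intro a ha b hb hab
    have hle : g b ≤ᵐ[ν] g a := by
      filter_upwards [hrec] with x hx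
      refine mul_le_mul_of_nonneg_left (Real.exp_le_exp.2 ?_) (Real.exp_pos _).le
      exact mul_le_mul_of_nonpos_right hab.le hx
    refine lt_of_le_of_ne (integral_mono_ae (hgi b hb) (hgi a ha) hle) fun heq => ?_
    have h0 := (integral_eq_iff_of_ae_le (hgi b hb) (hgi a ha) hle).1 heq
    apply hncon
    filter_upwards [hrec, h0] with x hx hnl
    by_contra hne
    have hlt : ⟪x - y, δ⟫ < 0 := lt_of_le_of_ne hx hne
    exact hnl.not_lt (mul_lt_mul_of_pos_left
      (Real.exp_lt_exp.2 (mul_lt_mul_of_neg_right hab hlt)) (Real.exp_pos _))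
  have hGlim : Tendsto G atTop (𝓝 A) := by
    rw [hA, ← integral_indicator hHm]
    refine tendsto_integral_filter_of_dominated_convergence w
      (Eventually.of_forall fun s => (hgc s).aestronglyMeasurable)
      ((eventually_ge_atTop 0).mono fun s hs => hgle s hs) hwi ?_
    filter_upwards [hrec] with x hx
    by_cases hxH : x ∈ H
    · rw [indicator_of_mem hxH]
      simp [hg, (hHmem x).1 hxH]
    · rw [indicator_of_notMem hxH]
      have hlt : ⟪x - y, δ⟫ < 0 := lt_of_le_of_ne hx fun h => hxH ((hHmem x).2 h)
      have h1 : Tendsto (fun s : ℝ => Real.exp (s * ⟪x - y, δ⟫)) atTop (𝓝 0) :=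
        Real.tendsto_exp_atBot.comp (tendsto_id.atTop_mul_const_of_neg hlt)
      simpa [hg] using h1.const_mul (w x)
  refine ⟨?_, ?_, ?_⟩
  · refine ContinuousOn.congr (f := fun s => A / G s) ?_ fun s hs => hform s hs
    exact continuousOn_const.div hGcont fun s hs => (hGpos s hs).ne'
  · intro a ha b hb hab
    simp only [hform a ha, hform b hb]
    exact div_lt_div_of_pos_left hApos (hGpos b hb) (hGanti ha hb hab)
  · have h1 : Tendsto (fun s => A / G s) atTop (𝓝 (A / A)) :=
      tendsto_const_nhds.div hGlim hApos.ne'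
    rw [div_self hApos.ne'] at h1
    exact h1.congr' ((eventually_ge_atTop 0).mono fun s hs => (hform s hs).symm)
end

section
/- Let V ⊆ ℝ^p be a finite set, let N = {δ ∈ ℝ^p : ⟨v, δ⟩ ≤ 0 for all v ∈ V}, and let L = {v ∈ V : −v ∈ pos V}. If L ≠ V, then a vector δ ∈ ℝ^p belongs to the relative interior of N (the interior of N relative to its affine hull) if and only if ⟨w, δ⟩ = 0 for all w ∈ L and ⟨w, δ⟩ < 0 for all w ∈ V \ L. -/
open Set
open scoped RealInnerProductSpace

/-- `posCone V` is the set of all nonnegative linear combinations of elements of the finite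
set `V`, i.e. the finitely generated convex cone spanned by `V`. -/
def posCone {p : ℕ} (V : Finset (EuclideanSpace ℝ (Fin p))) :
    Set (EuclideanSpace ℝ (Fin p)) :=
  {x | ∃ c : EuclideanSpace ℝ (Fin p) → ℝ, (∀ v ∈ V, 0 ≤ c v) ∧ x = ∑ v ∈ V, c v • v}


/-- The Farkas lemma, by algebraic induction on the number of generators. -/
theorem farkas_aux {E ι : Type*} [NormedAddCommGroup E] [InnerProductSpace ℝ E]
    (s : Finset ι) : ∀ (a : ι → E) (b : E),
    (∀ x : E, (∀ i ∈ s, ⟪a i, x⟫ ≤ 0) → ⟪b, x⟫ ≤ 0) →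
    ∃ c : ι → ℝ, (∀ i ∈ s, 0 ≤ c i) ∧ b = ∑ i ∈ s, c i • a i := by
  classical
  induction s using Finset.induction_on with
  | empty =>
    intro a b h
    refine ⟨0, by simp, ?_⟩
    have := h b (by simp)
    simpa using this
  | insert n s hn ih =>
    intro a b h
    by_cases h1 : ∀ x : E, (∀ i ∈ s, ⟪a i, x⟫ ≤ 0) → ⟪b, x⟫ ≤ 0
    · obtain ⟨c, hc, hb⟩ := ih a b h1
      refine ⟨Function.update c n 0, ?_, ?_⟩
      · intro i hi
        by_cases hin : i = n
        · subst hin; simp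
        · rw [Function.update_of_ne hin]
          exact hc i (Finset.mem_of_mem_insert_of_ne hi hin)
      · rw [Finset.sum_insert hn, hb]
        simp only [Function.update_self, zero_smul, zero_add]
        refine Finset.sum_congr rfl fun i hi => ?_
        rw [Function.update_of_ne (show i ≠ n by rintro rfl; exact hn hi)]
    · push Not at h1
      obtain ⟨y, hy, hby⟩ := h1
      have hny : 0 < ⟪a n, y⟫ := by
        by_contra hcon
        push Not at hcon
        have := h y (by
          intro i hi
          rcases Finset.mem_insert.1 hi with rfl | hi
          · exact hcon
          · exact hy i hi)
        linarith
      set r := ⟪a n, y⟫ with hr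
      have key := ih (fun i => a i - (⟪a i, y⟫ / r) • a n) (b - (⟪b, y⟫ / r) • a n) (by
        intro x hx
        have h2 := h (x - (⟪a n, x⟫ / r) • y) (by
          intro i hi
          rcases Finset.mem_insert.1 hi with rfl | hi
          · rw [inner_sub_right, inner_smul_right, ← hr]
            field_simp
            simp
          · have := hx i hi
            rw [inner_sub_left, inner_smul_left] at this
            rw [inner_sub_right, inner_smul_right]
            simp only [conj_trivial] at this
            calc _ = ⟪a i, x⟫ - ⟪a i, y⟫ / r * ⟪a n, x⟫ := by ring
              _ ≤ 0 := this)
        rw [inner_sub_right, inner_smul_right] at h2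
        rw [inner_sub_left, inner_smul_left]
        simp only [conj_trivial]
        calc _ = ⟪b, x⟫ - ⟪a n, x⟫ / r * ⟪b, y⟫ := by ring
          _ ≤ 0 := h2)
      obtain ⟨c, hc, hb⟩ := key
      refine ⟨Function.update c n (⟪b, y⟫ / r - ∑ i ∈ s, c i * (⟪a i, y⟫ / r)), ?_, ?_⟩
      · intro i hi
        by_cases hin : i = n
        · subst hin
          rw [Function.update_self]
          have h3 : ∑ i ∈ s, c i * (⟪a i, y⟫ / r) ≤ 0 :=
            Finset.sum_nonpos fun j hj => mul_nonpos_of_nonneg_of_nonpos (hc j hj)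
              (div_nonpos_of_nonpos_of_nonneg (hy j hj) hny.le)
          have h4 : 0 < ⟪b, y⟫ / r := div_pos hby hny
          linarith
        · rw [Function.update_of_ne hin]
          exact hc i (Finset.mem_of_mem_insert_of_ne hi hin)
      · rw [Finset.sum_insert hn, Function.update_self]
        have h5 : ∑ i ∈ s, Function.update c n
            (⟪b, y⟫ / r - ∑ i ∈ s, c i * (⟪a i, y⟫ / r)) i • a i = ∑ i ∈ s, c i • a i :=
          Finset.sum_congr rfl fun i hi => by
            rw [Function.update_of_ne (show i ≠ n by rintro rfl; exact hn hi)]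
        rw [h5]
        simp only [smul_sub, smul_smul, Finset.sum_sub_distrib, ← Finset.sum_smul] at hb
        rw [sub_smul]
        rw [sub_eq_iff_eq_add] at hb
        refine hb.trans ?_
        abel

/-- For a finite set `V ⊆ ℝ^p` with polar cone `N = {δ | ⟪v, δ⟫ ≤ 0 for all v ∈ V}` and
linearity `L = {v ∈ V | −v ∈ pos V}`, if `L ≠ V` then `δ` lies in the relative interior of
`N` iff `⟪w, δ⟫ = 0` for all `w ∈ L` and `⟪w, δ⟫ < 0` for all `w ∈ V \ L`. -/
theorem mem_intrinsicInterior_polarCone_iff {p : ℕ}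
    (V : Finset (EuclideanSpace ℝ (Fin p)))
    (hL : {v : EuclideanSpace ℝ (Fin p) | v ∈ V ∧ -v ∈ posCone V} ≠
      (V : Set (EuclideanSpace ℝ (Fin p))))
    (δ : EuclideanSpace ℝ (Fin p)) :
    δ ∈ intrinsicInterior ℝ
        {δ' : EuclideanSpace ℝ (Fin p) | ∀ v ∈ V, ⟪v, δ'⟫ ≤ 0} ↔
      (∀ w ∈ {v : EuclideanSpace ℝ (Fin p) | v ∈ V ∧ -v ∈ posCone V}, ⟪w, δ⟫ = 0) ∧
        (∀ w ∈ (V : Set (EuclideanSpace ℝ (Fin p))) \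
            {v : EuclideanSpace ℝ (Fin p) | v ∈ V ∧ -v ∈ posCone V}, ⟪w, δ⟫ < 0) := by
  classical
  set N : Set (EuclideanSpace ℝ (Fin p)) := {δ' | ∀ v ∈ V, ⟪v, δ'⟫ ≤ 0} with hN
  have hzero : ∀ w ∈ V, -w ∈ posCone V → ∀ x ∈ N, ⟪w, x⟫ = 0 := by
    rintro w hw ⟨c, hc, hcw⟩ x hx
    have h1 : ⟪-w, x⟫ ≤ 0 := by
      rw [hcw, sum_inner]
      refine Finset.sum_nonpos fun v hv => ?_
      rw [inner_smul_left]
      exact mul_nonpos_of_nonneg_of_nonpos (hc v hv) (hx v hv)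
    rw [inner_neg_left] at h1
    have h2 := hx w hw
    linarith
  have hsep : ∀ w ∈ V, -w ∉ posCone V → ∃ y ∈ N, ⟪w, y⟫ < 0 := by
    intro w hw hnw
    by_contra hcon
    push Not at hcon
    refine hnw (farkas_aux V (fun v => v) (-w) fun x hx => ?_)
    have := hcon x hx
    rw [inner_neg_left]
    linarith
  have hspan : ∀ w ∈ V, -w ∈ posCone V → ∀ x ∈ affineSpan ℝ N, ⟪w, x⟫ = 0 := by
    intro w hw hnw x hx
    have hle : affineSpan ℝ N ≤ (LinearMap.ker (innerₗ (EuclideanSpace ℝ (Fin p)) w)).toAffineSubspace := by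
      rw [affineSpan_le]
      intro z hz
      simpa using hzero w hw hnw z hz
    simpa using hle hx
  constructor
  · intro hδ
    have hδN : δ ∈ N := intrinsicInterior_subset hδ
    refine ⟨fun w hw => hzero w hw.1 hw.2 δ hδN, ?_⟩
    rintro w ⟨hw, hnw⟩
    obtain ⟨y, hy, hwy⟩ := hsep w hw (fun h => hnw ⟨hw, h⟩)
    obtain ⟨d, hd, rfl⟩ := mem_intrinsicInterior.1 hδ
    have hmem : ∀ t : ℝ, AffineMap.lineMap (d : EuclideanSpace ℝ (Fin p)) y t ∈ affineSpan ℝ N :=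
      fun t => AffineMap.lineMap_mem t d.2 (subset_affineSpan ℝ N hy)
    let f : ℝ → affineSpan ℝ N := fun t => ⟨_, hmem t⟩
    have hf : Continuous f := Continuous.subtype_mk AffineMap.lineMap_continuous _
    have hf0 : f 0 = d := Subtype.ext (by simp [f])
    have hev : ∀ᶠ t in nhds (0 : ℝ), (f t : EuclideanSpace ℝ (Fin p)) ∈ N := by
      have h1 := mem_interior_iff_mem_nhds.1 hd
      rw [← hf0] at h1
      exact hf.continuousAt.eventually h1
    obtain ⟨ε, hε, hball⟩ := Metric.eventually_nhds_iff.1 hev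
    have h2 := hball (y := -(ε / 2)) (by
      rw [Real.dist_eq, sub_zero, abs_neg, abs_of_pos (by linarith)]; linarith) w hw
    simp only [f, AffineMap.lineMap_apply_module, inner_add_right, inner_smul_right] at h2
    nlinarith
  · rintro ⟨h0, hneg⟩
    have hδN : δ ∈ N := by
      intro v hv
      by_cases h : -v ∈ posCone V
      · exact (h0 v ⟨hv, h⟩).le
      · exact (hneg v ⟨hv, fun h' => h h'.2⟩).le
    refine mem_intrinsicInterior.2 ⟨⟨δ, subset_affineSpan ℝ N hδN⟩, ?_, rfl⟩
    rw [mem_interior_iff_mem_nhds]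
    have hev : ∀ᶠ x : affineSpan ℝ N in nhds ⟨δ, subset_affineSpan ℝ N hδN⟩,
        ∀ v ∈ V, -v ∉ posCone V → ⟪v, (x : EuclideanSpace ℝ (Fin p))⟫ < 0 := by
      rw [Filter.eventually_all_finset]
      intro v hv
      by_cases h : -v ∈ posCone V
      · simp [h]
      · have hc : Continuous fun x : affineSpan ℝ N => ⟪v, (x : EuclideanSpace ℝ (Fin p))⟫ := by
          fun_prop
        filter_upwards [hc.continuousAt.eventually (gt_mem_nhds
          (hneg v ⟨hv, fun h' => h h'.2⟩))] with x hx _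
        exact hx
    filter_upwards [hev] with x hx
    intro v hv
    by_cases h : -v ∈ posCone V
    · exact (hspan v hv h x x.2).le
    · exact (hx v hv h).le
end

section
/- Let C ⊆ ℝ^p be convex with y ∈ C, and let V ⊆ ℝ^p be a finite set such that {s(w − y) : w ∈ C, s ≥ 0} = pos V. Let L = {v ∈ V : −v ∈ pos V}, and let δ ∈ ℝ^p satisfy ⟨w, δ⟩ = 0 for all w ∈ L and ⟨w, δ⟩ < 0 for all w ∈ V \ L. Set H = {w ∈ ℝ^p : ⟨w − y, δ⟩ = 0}. Then {s(w − y) : w ∈ C ∩ H, s ≥ 0} equals the linear span of L, and C ∩ H = C ∩ (y + span L), where y + span L = {y + v : v ∈ span L}. -/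
open Set
open scoped RealInnerProductSpace

theorem posCone_add {p : ℕ} {V : Finset (EuclideanSpace ℝ (Fin p))}
    {a b : EuclideanSpace ℝ (Fin p)} (ha : a ∈ posCone V) (hb : b ∈ posCone V) :
    a + b ∈ posCone V := by
  obtain ⟨c, hc, rfl⟩ := ha
  obtain ⟨d, hd, rfl⟩ := hb
  refine ⟨fun v => c v + d v, fun v hv => add_nonneg (hc v hv) (hd v hv), ?_⟩
  simp only [add_smul, Finset.sum_add_distrib]

theorem posCone_smul {p : ℕ} {V : Finset (EuclideanSpace ℝ (Fin p))}
    {a : EuclideanSpace ℝ (Fin p)} (ha : a ∈ posCone V) {r : ℝ} (hr : 0 ≤ r) :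
    r • a ∈ posCone V := by
  obtain ⟨c, hc, rfl⟩ := ha
  refine ⟨fun v => r * c v, fun v hv => mul_nonneg hr (hc v hv), ?_⟩
  simp only [mul_smul, Finset.smul_sum]

theorem posCone_zero {p : ℕ} {V : Finset (EuclideanSpace ℝ (Fin p))} :
    (0 : EuclideanSpace ℝ (Fin p)) ∈ posCone V :=
  ⟨fun _ => 0, fun _ _ => le_rfl, by simp⟩

theorem posCone_of_mem {p : ℕ} {V : Finset (EuclideanSpace ℝ (Fin p))}
    {a : EuclideanSpace ℝ (Fin p)} (ha : a ∈ V) : a ∈ posCone V := by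
  classical
  refine ⟨fun v => if v = a then 1 else 0, fun v _ => by dsimp only; split_ifs <;> norm_num, ?_⟩
  simp [ite_smul, ha]

/-- Let `C ⊆ ℝ^p` be convex with `y ∈ C`, and `V` finite with
`{s(w − y) | w ∈ C, s ≥ 0} = pos V`. With `L = {v ∈ V | −v ∈ pos V}`, let `δ` satisfy
`⟪w, δ⟫ = 0` on `L` and `⟪w, δ⟫ < 0` on `V \ L`, and set `H = {w | ⟪w − y, δ⟫ = 0}`. Then
`{s(w − y) | w ∈ C ∩ H, s ≥ 0} = span L` and `C ∩ H = C ∩ (y + span L)`. -/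
theorem tangentCone_inter_hyperplane_eq_span {p : ℕ}
    (C : Set (EuclideanSpace ℝ (Fin p))) (hCconv : Convex ℝ C)
    (y : EuclideanSpace ℝ (Fin p)) (hy : y ∈ C)
    (V : Finset (EuclideanSpace ℝ (Fin p)))
    (hV : {x : EuclideanSpace ℝ (Fin p) | ∃ w ∈ C, ∃ s : ℝ, 0 ≤ s ∧ x = s • (w - y)} =
      posCone V)
    (δ : EuclideanSpace ℝ (Fin p))
    (hδL : ∀ w ∈ {v : EuclideanSpace ℝ (Fin p) | v ∈ V ∧ -v ∈ posCone V}, ⟪w, δ⟫ = 0)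
    (hδV : ∀ w ∈ (V : Set (EuclideanSpace ℝ (Fin p))) \
      {v : EuclideanSpace ℝ (Fin p) | v ∈ V ∧ -v ∈ posCone V}, ⟪w, δ⟫ < 0)
    (H : Set (EuclideanSpace ℝ (Fin p)))
    (hH : H = {w : EuclideanSpace ℝ (Fin p) | ⟪w - y, δ⟫ = 0}) :
    {x : EuclideanSpace ℝ (Fin p) | ∃ w ∈ C ∩ H, ∃ s : ℝ, 0 ≤ s ∧ x = s • (w - y)} =
        (Submodule.span ℝ {v : EuclideanSpace ℝ (Fin p) | v ∈ V ∧ -v ∈ posCone V} :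
          Set (EuclideanSpace ℝ (Fin p))) ∧
      C ∩ H = C ∩ {z : EuclideanSpace ℝ (Fin p) |
        ∃ v ∈ Submodule.span ℝ {v : EuclideanSpace ℝ (Fin p) | v ∈ V ∧ -v ∈ posCone V},
          z = y + v} := by
  have hspan : ∀ x ∈ Submodule.span ℝ
      {v : EuclideanSpace ℝ (Fin p) | v ∈ V ∧ -v ∈ posCone V},
      (x ∈ posCone V ∧ -x ∈ posCone V) ∧ ⟪x, δ⟫ = 0 := by
    intro x hx
    induction hx using Submodule.span_induction with
    | mem x hx => exact ⟨⟨posCone_of_mem hx.1, hx.2⟩, hδL x hx⟩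
    | zero => exact ⟨⟨posCone_zero, by rw [neg_zero]; exact posCone_zero⟩, inner_zero_left _⟩
    | add a b _ _ ha hb =>
      refine ⟨⟨posCone_add ha.1.1 hb.1.1, ?_⟩, ?_⟩
      · rw [neg_add]; exact posCone_add ha.1.2 hb.1.2
      · rw [inner_add_left, ha.2, hb.2, add_zero]
    | smul r a _ ha =>
      refine ⟨?_, by rw [real_inner_smul_left, ha.2, mul_zero]⟩
      rcases le_total 0 r with hr | hr
      · refine ⟨posCone_smul ha.1.1 hr, ?_⟩
        rw [← smul_neg]; exact posCone_smul ha.1.2 hr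
      · have hr' : 0 ≤ -r := by linarith
        refine ⟨?_, ?_⟩
        · rw [← neg_smul_neg]; exact posCone_smul ha.1.2 hr'
        · rw [← neg_smul]; exact posCone_smul ha.1.1 hr'
  have hback : ∀ x ∈ posCone V, ⟪x, δ⟫ = 0 → x ∈ Submodule.span ℝ
      {v : EuclideanSpace ℝ (Fin p) | v ∈ V ∧ -v ∈ posCone V} := by
    rintro x ⟨c, hc, rfl⟩ hx
    rw [sum_inner] at hx
    have hle : ∀ v ∈ V, ⟪v, δ⟫ ≤ 0 := by
      intro v hv
      by_cases h : -v ∈ posCone V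
      · exact (hδL v ⟨hv, h⟩).le
      · exact (hδV v ⟨hv, fun h' => h h'.2⟩).le
    rw [Finset.sum_eq_zero_iff_of_nonpos] at hx
    · refine Submodule.sum_mem _ fun v hv => ?_
      by_cases h : -v ∈ posCone V
      · exact Submodule.smul_mem _ _ (Submodule.subset_span ⟨hv, h⟩)
      · have h1 := hδV v ⟨hv, fun h' => h h'.2⟩
        have h2 := hx v hv
        rw [real_inner_smul_left] at h2
        rcases mul_eq_zero.1 h2 with h3 | h3
        · rw [h3, zero_smul]; exact Submodule.zero_mem _
        · exact absurd h3 h1.ne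
    · intro v hv
      rw [real_inner_smul_left]
      exact mul_nonpos_of_nonneg_of_nonpos (hc v hv) (hle v hv)
  have hCpos : ∀ w ∈ C, w - y ∈ posCone V := by
    intro w hw
    rw [← hV]
    exact ⟨w, hw, 1, zero_le_one, (one_smul _ _).symm⟩
  subst hH
  refine ⟨?_, ?_⟩
  · ext x
    constructor
    · rintro ⟨w, ⟨hwC, hwH⟩, s, hs, rfl⟩
      exact Submodule.smul_mem _ _ (hback _ (hCpos w hwC) hwH)
    · intro hx
      obtain ⟨⟨hx1, -⟩, hx2⟩ := hspan x hx
      rw [← hV] at hx1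
      obtain ⟨w, hw, s, hs, rfl⟩ := hx1
      rcases eq_or_ne s 0 with h0 | h0
      · exact ⟨y, ⟨hy, by simp⟩, 0, le_rfl, by simp [h0]⟩
      · rw [real_inner_smul_left] at hx2
        exact ⟨w, ⟨hw, (mul_eq_zero.1 hx2).resolve_left h0⟩, s, hs, rfl⟩
  · ext w
    constructor
    · rintro ⟨hwC, hwH⟩
      exact ⟨hwC, w - y, hback _ (hCpos w hwC) hwH, by abel⟩
    · rintro ⟨hwC, v, hv, rfl⟩
      refine ⟨hwC, ?_⟩
      show ⟪y + v - y, δ⟫ = 0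
      rw [add_sub_cancel_left]
      exact (hspan v hv).2
end

section
/- Let C ⊆ ℝ^p be convex with y ∈ C, and let V ⊆ ℝ^p be a finite set such that for every w ∈ C the vector w − y lies in pos V. Let η ∈ ℝ^p, set L = {v ∈ V : ⟨v, η⟩ = 0}, and assume ⟨v, η⟩ < 0 for every v ∈ V \ L. Define H = {w ∈ ℝ^p : ⟨w − y, η⟩ = 0}. Then C ∩ H = C ∩ (y + span L), where y + span L = {y + v : v ∈ span L}. -/
open Set
open scoped RealInnerProductSpace

/-- Let `C ⊆ ℝ^p` be convex with `y ∈ C`, and `V` finite with `w − y ∈ pos V` for every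
`w ∈ C`. Let `η ∈ ℝ^p`, `L = {v ∈ V | ⟪v, η⟫ = 0}`, and suppose `⟪v, η⟫ < 0` for every
`v ∈ V \ L`. With `H = {w | ⟪w − y, η⟫ = 0}`, we have `C ∩ H = C ∩ (y + span L)`. -/
theorem inter_hyperplane_eq_inter_span {p : ℕ}
    (C : Set (EuclideanSpace ℝ (Fin p))) (hCconv : Convex ℝ C)
    (y : EuclideanSpace ℝ (Fin p)) (hy : y ∈ C)
    (V : Finset (EuclideanSpace ℝ (Fin p)))
    (hV : ∀ w ∈ C, w - y ∈ posCone V)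
    (η : EuclideanSpace ℝ (Fin p))
    (hη : ∀ v ∈ (V : Set (EuclideanSpace ℝ (Fin p))) \
      {v : EuclideanSpace ℝ (Fin p) | v ∈ V ∧ ⟪v, η⟫ = 0}, ⟪v, η⟫ < 0)
    (H : Set (EuclideanSpace ℝ (Fin p)))
    (hH : H = {w : EuclideanSpace ℝ (Fin p) | ⟪w - y, η⟫ = 0}) :
    C ∩ H = C ∩ {z : EuclideanSpace ℝ (Fin p) |
      ∃ v ∈ Submodule.span ℝ {v : EuclideanSpace ℝ (Fin p) | v ∈ V ∧ ⟪v, η⟫ = 0},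
        z = y + v} := by
  subst hH
  ext w
  constructor
  · rintro ⟨hw, hwH⟩
    refine ⟨hw, w - y, ?_, by abel⟩
    obtain ⟨c, hc, hsum⟩ := hV w hw
    have hwH' : ⟪w - y, η⟫ = 0 := hwH
    have h0 : ∑ v ∈ V, c v * ⟪v, η⟫ = 0 := by
      rw [← hwH', hsum, sum_inner]
      exact Finset.sum_congr rfl fun v _ => (real_inner_smul_left _ _ _).symm
    have hle : ∀ v ∈ V, ⟪v, η⟫ ≤ 0 := by
      intro v hv
      by_cases h : ⟪v, η⟫ = 0
      · exact h.le
      · exact (hη v ⟨hv, fun h' => h h'.2⟩).le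
    have hz := (Finset.sum_eq_zero_iff_of_nonpos
      (fun v hv => mul_nonpos_of_nonneg_of_nonpos (hc v hv) (hle v hv))).1 h0
    rw [hsum]
    refine Submodule.sum_mem _ fun v hv => ?_
    rcases mul_eq_zero.1 (hz v hv) with h | h
    · rw [h, zero_smul]
      exact Submodule.zero_mem _
    · exact Submodule.smul_mem _ _ (Submodule.subset_span ⟨hv, h⟩)
  · rintro ⟨hw, v, hv, rfl⟩
    refine ⟨hw, ?_⟩
    change ⟪y + v - y, η⟫ = 0
    rw [add_sub_cancel_left]
    clear hw
    induction hv using Submodule.span_induction with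
    | mem x hx => exact hx.2
    | zero => exact inner_zero_left _
    | add a b _ _ ha hb => rw [inner_add_left, ha, hb, add_zero]
    | smul r a _ ha => rw [real_inner_smul_left, ha, mul_zero]
end
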